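/- arXiv:1809.07728 — 2 statements merged into one kernel-verified Lean document; each statement's English description precedes it below -/
import Mathlib

section
/- Let G be a finite connected undirected graph with n+1 vertices and a designated sink vertex s, and let c be a stable configuration on G. Then c is recurrent if and only if there exists an ordering v_0 = s, v_1, …, v_n of all the vertices of G such that, starting from c, for every i ≥ 1 the vertex v_i is unstable after toppling v_0, …, v_{i−1} in order. Moreover, if such an ordering exists, then toppling v_0, v_1, …, v_n in order returns the initial configuration c. -/
open Classical

namespace ASM

variable {V : Type*}

/-- Degree of a vertex. -/
noncomputable def deg (G : SimpleGraph V) (v : V) : ℕ := {u | G.Adj v u}.ncard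

/-- Toppling a single vertex of the sandpile model on `G` with sink `s`.
The height at the sink is kept equal to `c s` (grains sent to the sink vanish);
toppling the sink sends one grain to each of its neighbours. -/
noncomputable def topple (G : SimpleGraph V) (s : V) (c : V → ℕ) (v : V) : V → ℕ :=
  fun u =>
    if u = s then c s
    else if u = v then c v - deg G v
    else if G.Adj v u then c u + 1
    else c u

/-- Toppling the vertices of a list in order. -/
noncomputable def toppleList (G : SimpleGraph V) (s : V) (c : V → ℕ) (l : List V) :
    V → ℕ :=
  l.foldl (topple G s) c

/-- A configuration is stable if every non-sink vertex has fewer grains than its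
degree. -/
def Stable (G : SimpleGraph V) (s : V) (c : V → ℕ) : Prop :=
  ∀ v, v ≠ s → c v < deg G v

/-- A legal toppling sequence from `c`: each toppled vertex is a non-sink vertex
that is unstable at the moment it is toppled. -/
def LegalSeq (G : SimpleGraph V) (s : V) : (V → ℕ) → List V → Prop
  | _, [] => True
  | c, v :: l => v ≠ s ∧ deg G v ≤ c v ∧ LegalSeq G s (topple G s c v) l

/-- The maximal stable configuration (every non-sink vertex one grain shy of
toppling) with `a v` extra grains added at each vertex `v`; the sink height is
normalised to `0`. -/
noncomputable def maxStablePlus (G : SimpleGraph V) (s : V) (a : V → ℕ) : V → ℕ :=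
  fun v => if v = s then 0 else deg G v - 1 + a v

/-- A configuration is recurrent if it can be obtained from the maximal stable
configuration by adding some grains and then performing a finite legal sequence of
topplings of unstable non-sink vertices. -/
def Recurrent (G : SimpleGraph V) (s : V) (c : V → ℕ) : Prop :=
  ∃ a : V → ℕ, ∃ l : List V,
    LegalSeq G s (maxStablePlus G s a) l ∧ toppleList G s (maxStablePlus G s a) l = c

/-- A Dhar (burning) ordering for `c`: an ordering `v₀ = s, v₁, …, vₙ` of all the
vertices such that each `vᵢ` (`i ≥ 1`) is unstable after toppling `v₀, …, v_{i-1}`. -/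
def DharSeq (G : SimpleGraph V) (s : V) (c : V → ℕ) (l : List V) : Prop :=
  l.Nodup ∧ (∀ v, v ∈ l) ∧ l.head? = some s ∧
    ∀ i, ∀ h : i < l.length, 1 ≤ i →
      deg G (l.get ⟨i, h⟩) ≤ toppleList G s c (l.take i) (l.get ⟨i, h⟩)

end ASM

namespace ASM

section Prelim

variable {V : Type*} {G : SimpleGraph V} {s : V}

theorem topple_sink (c : V → ℕ) (v : V) : topple G s c v s = c s := by
  simp [topple]

theorem toppleList_sink (c : V → ℕ) (l : List V) : toppleList G s c l s = c s := by
  induction l generalizing c with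
  | nil => rfl
  | cons v l ih => exact (ih _).trans (topple_sink c v)

theorem toppleList_append (c : V → ℕ) (l l' : List V) :
    toppleList G s c (l ++ l') = toppleList G s (toppleList G s c l) l' := by
  simp [toppleList]

theorem LegalSeq.append {c : V → ℕ} {l l' : List V} (h : LegalSeq G s c l)
    (h' : LegalSeq G s (toppleList G s c l) l') : LegalSeq G s c (l ++ l') := by
  induction l generalizing c with
  | nil => exact h'
  | cons v l ih => exact ⟨h.1, h.2.1, ih h.2.2 h'⟩

theorem topple_of_ne (c : V → ℕ) {v w : V} (hvs : v ≠ s) (hvw : v ≠ w) :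
    topple G s c w v = c v + if G.Adj w v then 1 else 0 := by
  unfold topple
  split_ifs <;> simp_all

theorem topple_self (c : V → ℕ) {v : V} (hvs : v ≠ s) :
    topple G s c v v = c v - deg G v := by
  simp [topple, hvs]

/-- A vertex that is not toppled receives one grain from each toppled neighbour. -/
theorem toppleList_of_notMem (c : V → ℕ) {l : List V} {v : V} (hvs : v ≠ s) (hv : v ∉ l) :
    toppleList G s c l v = c v + l.countP (fun u => decide (G.Adj u v)) := by
  induction l generalizing c with
  | nil => simp [toppleList]
  | cons w l ih =>
    simp only [List.mem_cons, not_or] at hv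
    have := ih (topple G s c w) hv.2
    rw [topple_of_ne c hvs hv.1] at this
    simp only [toppleList, List.foldl_cons, List.countP_cons, decide_eq_true_eq] at this ⊢
    omega

/-- A duplicate-free list of non-sink vertices is a legal toppling sequence as soon as each
vertex is unstable once the grains from its predecessors are added. -/
theorem legalSeq_of_splits {c : V → ℕ} {l : List V} (hl : l.Nodup) (hs : s ∉ l)
    (h : ∀ p v q, l = p ++ v :: q →
      deg G v ≤ c v + p.countP (fun u => decide (G.Adj u v))) :
    LegalSeq G s c l := by
  induction l generalizing c with
  | nil => trivial
  | cons w l ih =>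
    simp only [List.mem_cons, not_or] at hs
    rw [List.nodup_cons] at hl
    refine ⟨Ne.symm hs.1, by simpa using h [] w l rfl, ih hl.2 hs.2 ?_⟩
    intro p v q hpq
    have hv : v ∈ l := by simp [hpq]
    have hvw : v ≠ w := fun e => hl.1 (e ▸ hv)
    have hvs : v ≠ s := fun e => hs.2 (e ▸ hv)
    have := h (w :: p) v q (by simp [hpq])
    rw [topple_of_ne c hvs hvw]
    simp only [List.countP_cons, decide_eq_true_eq] at this
    omega

/-- A vertex toppled exactly once in a legal sequence loses its degree and receives one grain
from each other toppled neighbour. -/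
theorem LegalSeq.toppleList_add_deg {c : V → ℕ} {l : List V} (h : LegalSeq G s c l)
    (hl : l.Nodup) {v : V} (hvs : v ≠ s) (hv : v ∈ l) :
    toppleList G s c l v + deg G v = c v + l.countP (fun u => decide (G.Adj u v)) := by
  induction l generalizing c with
  | nil => simp at hv
  | cons w l ih =>
    rw [List.nodup_cons] at hl
    obtain ⟨_, hw, hleg⟩ := h
    by_cases hvw : v = w
    · subst hvw
      have := toppleList_of_notMem (G := G) (topple G s c v) hvs hl.1
      rw [topple_self c hvs] at this
      simp only [toppleList, List.foldl_cons, List.countP_cons, decide_eq_true_eq,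
        SimpleGraph.irrefl, if_false] at this ⊢
      omega
    · have := ih hleg hl.2 (by simpa [hvw] using hv)
      rw [topple_of_ne c hvs hvw] at this
      simp only [toppleList, List.foldl_cons, List.countP_cons, decide_eq_true_eq] at this ⊢
      omega

theorem DharSeq.exists_tail {c : V → ℕ} {l : List V} (h : DharSeq G s c l) :
    ∃ t, l = s :: t ∧ t.Nodup ∧ s ∉ t ∧ (∀ v, v ≠ s → v ∈ t) ∧
      ∀ p v q, t = p ++ v :: q → deg G v ≤ topple G s c s v +
        p.countP (fun u => decide (G.Adj u v)) := by
  obtain ⟨hnd, hall, hhead, hburn⟩ := h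
  cases l with
  | nil => simp at hhead
  | cons w t =>
    obtain rfl : w = s := by simpa using hhead
    rw [List.nodup_cons] at hnd
    refine ⟨t, rfl, hnd.2, hnd.1, fun v hv => by simpa [hv] using hall v, ?_⟩
    intro p v q hpq
    have hvs : v ≠ w := fun e => hnd.1 (by simp [hpq, e])
    have hvp : v ∉ p := fun hv => by
      have := hnd.2
      rw [hpq, List.nodup_append] at this
      exact this.2.2 v hv v (by simp) rfl
    have := hburn (p.length + 1) (by simp [hpq]) (by omega)
    simp only [hpq, List.get_eq_getElem, List.getElem_cons_succ, List.take_succ_cons,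
      List.take_left', List.getElem_append_right le_rfl, Nat.sub_self,
      List.getElem_cons_zero] at this
    rw [← toppleList_of_notMem _ hvs hvp]
    exact this

/-- `c` has no forbidden subconfiguration: every nonempty set of non-sink vertices contains a
vertex with at least as many grains as it has neighbours in the set. -/
def NoForbidden (G : SimpleGraph V) (s : V) (c : V → ℕ) : Prop :=
  ∀ F : Finset V, F.Nonempty → s ∉ F → ∃ v ∈ F, (F.filter fun u => G.Adj u v).card ≤ c v

theorem NoForbidden.topple {c : V → ℕ} (h : NoForbidden G s c) (w : V) :
    NoForbidden G s (topple G s c w) := by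
  intro F hF hs
  by_cases hF' : (F.erase w).Nonempty
  · obtain ⟨v, hv, hle⟩ := h (F.erase w) hF' (fun h => hs (Finset.mem_of_mem_erase h))
    rw [Finset.mem_erase] at hv
    refine ⟨v, hv.2, ?_⟩
    have hvs : v ≠ s := fun e => hs (e ▸ hv.2)
    rw [topple_of_ne c hvs hv.1]
    rw [Finset.filter_erase] at hle
    split_ifs with hadj
    · have := Finset.pred_card_le_card_erase (s := F.filter fun u => G.Adj u v) (a := w)
      omega
    · rwa [Finset.erase_eq_of_notMem (by simp [hadj])] at hle
  · obtain ⟨x, hx⟩ := hF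
    rw [Finset.not_nonempty_iff_eq_empty, Finset.erase_eq_empty_iff] at hF'
    obtain rfl : F = {w} := hF'.resolve_left (Finset.ne_empty_of_mem hx)
    exact ⟨w, by simp, by simp [Finset.filter_singleton]⟩

theorem NoForbidden.toppleList {c : V → ℕ} (h : NoForbidden G s c) (l : List V) :
    NoForbidden G s (toppleList G s c l) := by
  induction l generalizing c with
  | nil => exact h
  | cons w l ih => exact ih (h.topple w)

end Prelim

section Finite

variable {V : Type*} [Fintype V] {G : SimpleGraph V} {s : V}

theorem deg_eq_card (v : V) : deg G v = (Finset.univ.filter fun u => G.Adj u v).card := by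
  rw [deg, Set.ncard_eq_toFinset_card']
  congr 1
  ext u
  simp [G.adj_comm]

theorem countP_adj_eq_card {l : List V} (hl : l.Nodup) (v : V) :
    l.countP (fun u => decide (G.Adj u v)) =
      (Finset.univ.filter fun u => G.Adj u v ∧ u ∈ l).card := by
  rw [List.countP_eq_length_filter, ← List.toFinset_card_of_nodup (hl.filter _)]
  congr 1
  ext u
  simp [and_comm]

theorem DharSeq.toppleList_eq {c : V → ℕ} {l : List V} (h : DharSeq G s c l) :
    toppleList G s c l = c := by
  obtain ⟨t, rfl, hnd, hs, hall, hburn⟩ := h.exists_tail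
  funext v
  by_cases hvs : v = s
  · rw [hvs, toppleList_sink]
  have hleg := legalSeq_of_splits hnd hs hburn
  have h1 := hleg.toppleList_add_deg hnd hvs (hall v hvs)
  rw [topple_of_ne c hvs hvs] at h1
  have h2 := countP_adj_eq_card (G := G) (List.nodup_cons.2 ⟨hs, hnd⟩) v
  have h3 : (Finset.univ.filter fun u => G.Adj u v ∧ u ∈ s :: t) =
      Finset.univ.filter fun u => G.Adj u v := by
    ext u
    have : u = s ∨ u ∈ t := or_iff_not_imp_left.2 (hall u)
    simp [this]
  rw [h3, ← deg_eq_card] at h2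
  simp only [toppleList, List.foldl_cons, List.countP_cons, decide_eq_true_eq] at h1 h2 ⊢
  omega

theorem noForbidden_maxStablePlus (hG : G.Connected) (a : V → ℕ) :
    NoForbidden G s (maxStablePlus G s a) := by
  intro F ⟨x, hx⟩ hs
  obtain ⟨p⟩ := hG.preconnected x s
  obtain ⟨d, -, hd1, hd2⟩ := p.exists_boundary_dart (F : Set V) (by simpa) (by simpa)
  simp only [Finset.mem_coe] at hd1 hd2
  refine ⟨d.fst, hd1, ?_⟩
  have hne : d.fst ≠ s := fun e => hs (e ▸ hd1)
  have : (F.filter fun u => G.Adj u d.fst).card < deg G d.fst := by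
    rw [deg_eq_card]
    refine Finset.card_lt_card (Finset.ssubset_iff_of_subset ?_ |>.2 ⟨d.snd, ?_, ?_⟩)
    · exact Finset.filter_subset_filter _ (Finset.subset_univ _)
    · simpa using d.adj.symm
    · simp [hd2]
  simp only [maxStablePlus, hne, if_false]
  omega

theorem NoForbidden.exists_dharSeq {c : V → ℕ} (h : NoForbidden G s c) :
    ∃ l, DharSeq G s c l := by
  have key : ∀ k : ℕ, ∃ l : List V, l.Nodup ∧ ((∀ v, v ∈ l) ∨ k ≤ l.length) ∧
      l.head? = some s ∧ ∀ i, ∀ h : i < l.length, 1 ≤ i →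
        deg G (l.get ⟨i, h⟩) ≤ ASM.toppleList G s c (l.take i) (l.get ⟨i, h⟩) := by
    intro k
    induction k with
    | zero => exact ⟨[s], by simp, by simp, by simp, fun i h h' => by simp at h; omega⟩
    | succ k ih =>
      obtain ⟨l, hnd, hk, hhead, hburn⟩ := ih
      by_cases hall : ∀ v, v ∈ l
      · exact ⟨l, hnd, Or.inl hall, hhead, hburn⟩
      have hk := hk.resolve_left hall
      push Not at hall
      obtain ⟨x, hx⟩ := hall
      have hsl : s ∈ l := List.mem_of_mem_head? hhead
      obtain ⟨v, hv, hle⟩ := h (Finset.univ.filter fun u => u ∉ l) ⟨x, by simpa⟩ (by simpa)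
      have hv : v ∉ l := by simpa using hv
      have hvs : v ≠ s := fun e => hv (e ▸ hsl)
      refine ⟨l ++ [v], ?_, Or.inr (by simpa), by simp [List.head?_append, hhead], ?_⟩
      · rw [List.nodup_append]
        refine ⟨hnd, by simp, ?_⟩
        rintro a ha b hb rfl
        exact hv (by simpa using List.mem_singleton.1 hb ▸ ha)
      · intro i hi h1
        rcases Nat.lt_or_ge i l.length with hil | hil
        · have := hburn i hil h1
          simpa [List.getElem_append_left hil, List.take_append_of_le_length hil.le] using this
        · obtain rfl : i = l.length := by simp at hi; omega
          simp only [List.get_eq_getElem, List.take_left', List.getElem_append_right le_rfl,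
            Nat.sub_self, List.getElem_cons_zero]
          rw [toppleList_of_notMem c hvs hv, countP_adj_eq_card hnd, deg_eq_card,
            ← Finset.card_filter_add_card_filter_not (s := Finset.univ.filter fun u => G.Adj u v)
              (fun u => u ∈ l), Finset.filter_filter, Finset.filter_filter]
          rw [Finset.filter_filter] at hle
          simp only [and_comm] at hle ⊢
          omega
  obtain ⟨l, hnd, hl, hhead, hburn⟩ := key (Fintype.card V + 1)
  refine ⟨l, hnd, hl.resolve_right ?_, hhead, hburn⟩
  have := hnd.length_le_card
  omega

/-- The graph Laplacian applied to a potential `m`. -/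
noncomputable def lap (G : SimpleGraph V) (m : V → ℤ) (v : V) : ℤ :=
  ∑ u with G.Adj u v, (m v - m u)

/-- Toppling in burning order each vertex `v` altogether `min (m v) t` times. -/
theorem exists_legalSeq_of_lap {c : V → ℕ} {l : List V} (hl : DharSeq G s c l) {m : V → ℕ}
    (hm : m s = 0) (t : ℕ) {e : V → ℕ} (hes : e s = c s)
    (he : ∀ v, v ≠ s → (e v : ℤ) = c v + lap G (fun u => (min (m u) t : ℕ)) v) :
    ∃ L, LegalSeq G s e L ∧ toppleList G s e L = c := by
  obtain ⟨b, -, hnd, hs, hall, hburn⟩ := hl.exists_tail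
  induction t generalizing e with
  | zero =>
    refine ⟨[], trivial, funext fun v => ?_⟩
    by_cases hvs : v = s
    · rw [hvs]; exact hes
    · simpa [lap, toppleList] using he v hvs
  | succ t ih =>
    set L := b.filter (fun u => decide (t + 1 ≤ m u)) with hLdef
    have hLnd : L.Nodup := hnd.filter _
    have hmem : ∀ u, u ∈ L ↔ t + 1 ≤ m u := by
      intro u
      simp only [hLdef, List.mem_filter, decide_eq_true_eq, and_iff_right_iff_imp]
      exact fun hu => hall u (fun e => by rw [e, hm] at hu; omega)
    have hleg : LegalSeq G s e L := by
      refine legalSeq_of_splits hLnd (fun h => hs (List.mem_of_mem_filter h)) ?_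
      intro p v q hpq
      have hvL : v ∈ L := by simp [hpq]
      have hvm := (hmem v).1 hvL
      have hvs : v ≠ s := fun e => hs (e ▸ List.mem_of_mem_filter hvL)
      obtain ⟨p₁, r, rfl, rfl, hr⟩ := List.filter_eq_append_iff.1 hpq
      obtain ⟨p₂, q', rfl, hp₂, -, -⟩ := List.filter_eq_cons_iff.1 hr
      have hb := hburn (p₁ ++ p₂) v q' (by simp)
      have hnd' : (s :: (p₁ ++ p₂)).Nodup := by
        refine List.Nodup.sublist ?_ (List.nodup_cons.2 ⟨hs, hnd⟩)
        rw [← List.append_assoc]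
        exact (List.sublist_append_left _ _).cons_cons s
      rw [topple_of_ne c hvs hvs] at hb
      have h1 := countP_adj_eq_card (G := G) hnd' v
      simp only [List.countP_cons, decide_eq_true_eq] at h1
      have hp₁ : (p₁.filter (fun u => decide (t + 1 ≤ m u))).Nodup :=
        (hnd.sublist (List.sublist_append_left _ _)).filter _
      rw [countP_adj_eq_card hp₁]
      have h2 := he v hvs
      have h3 : ((Finset.univ.filter fun u => G.Adj u v ∧ u ∈ s :: (p₁ ++ p₂)).card : ℤ) ≤
          lap G (fun u => (min (m u) (t + 1) : ℕ)) v +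
          (Finset.univ.filter fun u => G.Adj u v ∧
            u ∈ p₁.filter (fun u => decide (t + 1 ≤ m u))).card := by
        simp only [lap, ← Finset.filter_filter, Finset.card_filter, Nat.cast_sum]
        rw [← Finset.sum_add_distrib]
        refine Finset.sum_le_sum fun u _ => ?_
        by_cases hu : t + 1 ≤ m u
        · have hus : u ≠ s := fun e => by rw [e, hm] at hu; omega
          have hup : u ∉ p₂ := fun h => by simpa [hu] using hp₂ u h
          simp [Nat.lt_of_succ_le hu, hu, hus, hup, hvm]
        · have : ((if u ∈ s :: (p₁ ++ p₂) then 1 else 0 : ℕ) : ℤ) ≤ 1 := by split_ifs <;> simp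
          have h4 : ((if u ∈ p₁.filter (fun u => decide (t + 1 ≤ m u)) then 1 else 0 : ℕ) : ℤ)
            = 0 := by simp [Nat.le_of_lt_succ (not_le.1 hu)]
          rw [h4]
          omega
      omega
    obtain ⟨L', hL', hfin⟩ := ih (e := toppleList G s e L) ((toppleList_sink e L).trans hes) (by
      intro v hvs
      have h1 := he v hvs
      have h2 : (toppleList G s e L v : ℤ) + (if v ∈ L then 1 else 0) * deg G v =
          e v + L.countP (fun u => decide (G.Adj u v)) := by
        split_ifs with hv
        · exact_mod_cast by simpa using hleg.toppleList_add_deg hLnd hvs hv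
        · exact_mod_cast by simpa using toppleList_of_notMem e hvs hv
      rw [countP_adj_eq_card hLnd, deg_eq_card] at h2
      have h3 : lap G (fun u => (min (m u) (t + 1) : ℕ)) v +
          (Finset.univ.filter fun u => G.Adj u v ∧ u ∈ L).card =
          lap G (fun u => (min (m u) t : ℕ)) v +
          (if v ∈ L then 1 else 0) * (Finset.univ.filter fun u => G.Adj u v).card := by
        simp only [lap, ← Finset.filter_filter, Finset.card_filter _ (Finset.filter _ _),
          Nat.cast_sum]
        rw [Finset.card_eq_sum_ones, Nat.cast_sum, Finset.mul_sum,
          ← Finset.sum_add_distrib, ← Finset.sum_add_distrib]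
        refine Finset.sum_congr rfl fun u _ => ?_
        simp only [hmem]
        split_ifs <;> push_cast <;> omega
      linarith)
    exact ⟨L ++ L', hleg.append hL', by rw [toppleList_append, hfin]⟩

/-- A potential vanishing at the sink with large Laplacian off the sink. -/
theorem exists_deg_le_lap (hG : G.Connected) (s : V) :
    ∃ m : V → ℕ, m s = 0 ∧ ∀ v, v ≠ s → (deg G v : ℤ) ≤ lap G (fun u => m u) v := by
  obtain ⟨N, hN⟩ : ∃ N, ∀ v, G.dist s v ≤ N :=
    ⟨Finset.univ.sup (G.dist s), fun v => Finset.le_sup (Finset.mem_univ v)⟩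
  set K := 2 * Fintype.card V with hK
  have hK0 : 0 < K := by have := Fintype.card_pos_iff.2 ⟨s⟩; omega
  set h : V → ℕ := fun v => K ^ (N - G.dist s v) with hh
  have hle : ∀ v, h v ≤ K ^ N := fun v => Nat.pow_le_pow_right hK0 (Nat.sub_le _ _)
  refine ⟨fun v => K ^ N - h v, by simp [hh], fun v hvs => ?_⟩
  have hlap : lap G (fun u => ((K ^ N - h u : ℕ) : ℤ)) v =
      (∑ u with G.Adj u v, (h u : ℤ)) - deg G v * h v := by
    simp only [lap, Nat.cast_sub (hle _)]
    rw [deg_eq_card, ← nsmul_eq_mul, ← Finset.sum_const, ← Finset.sum_sub_distrib]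
    exact Finset.sum_congr rfl fun u _ => by ring
  rw [hlap]
  obtain ⟨u, hu, hd⟩ : ∃ u, G.Adj u v ∧ G.dist s u + 1 ≤ G.dist s v := by
    obtain ⟨p, hp⟩ := hG.exists_walk_length_eq_dist v s
    cases p with
    | nil => exact absurd rfl hvs
    | cons hadj q =>
      refine ⟨_, hadj.symm, ?_⟩
      have := G.dist_le q
      rw [SimpleGraph.dist_comm (v := v), ← hp, SimpleGraph.dist_comm,
        SimpleGraph.Walk.length_cons]
      omega
  have h1 : K * h v ≤ h u := by
    simp only [hh, ← pow_succ']
    exact Nat.pow_le_pow_right hK0 (by have := hN v; omega)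
  have h2 : (h u : ℤ) ≤ ∑ u with G.Adj u v, (h u : ℤ) :=
    Finset.single_le_sum (f := fun u => (h u : ℤ)) (fun _ _ => by positivity) (by simpa using hu)
  have h3 : deg G v ≤ Fintype.card V := by rw [deg_eq_card]; exact Finset.card_le_univ _
  have h4 : 1 ≤ h v := Nat.pow_pos hK0
  have h5 : deg G v + deg G v * h v ≤ K * h v := by rw [hK]; nlinarith
  zify at h1 h5
  linarith

theorem DharSeq.recurrent (hG : G.Connected) {c : V → ℕ} (hcs : c s = 0) {l : List V}
    (hl : DharSeq G s c l) : Recurrent G s c := by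
  obtain ⟨m, hm, hlap⟩ := exists_deg_le_lap hG s
  obtain ⟨t, ht⟩ : ∃ t, ∀ v, m v ≤ t :=
    ⟨Finset.univ.sup m, fun v => Finset.le_sup (Finset.mem_univ v)⟩
  refine ⟨fun v => (c v + lap G (fun u => m u) v - (deg G v - 1 : ℕ)).toNat, ?_⟩
  refine exists_legalSeq_of_lap hl hm t (by simp [maxStablePlus, hcs]) fun v hvs => ?_
  simp only [min_eq_left (ht _), maxStablePlus, hvs, if_false]
  have := hlap v hvs
  omega

theorem Recurrent.exists_dharSeq (hG : G.Connected) {c : V → ℕ} (h : Recurrent G s c) :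
    ∃ l, DharSeq G s c l := by
  obtain ⟨a, l, -, rfl⟩ := h
  exact ((noForbidden_maxStablePlus hG a).toppleList l).exists_dharSeq

end Finite

end ASM

/-- **Dhar's burning criterion.** Let `G` be a finite connected graph
with `n + 1` vertices, sink `s`, and let `c` be a stable configuration.  Then `c`
is recurrent if and only if there is an ordering `v₀ = s, v₁, …, vₙ` of all the
vertices such that each `vᵢ` (`i ≥ 1`) is unstable after toppling `v₀, …, v_{i-1}`.
Moreover, if such an ordering exists, then toppling `v₀, v₁, …, vₙ` in order
returns the initial configuration `c`. -/
theorem dhar_burning_criterion {V : Type*} [Fintype V] (n : ℕ)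
    (hV : Fintype.card V = n + 1) (G : SimpleGraph V) (hG : G.Connected) (s : V)
    (c : V → ℕ) (hcs : c s = 0) (hstable : ASM.Stable G s c) :
    (ASM.Recurrent G s c ↔ ∃ l, ASM.DharSeq G s c l) ∧
      ∀ l, ASM.DharSeq G s c l → ASM.toppleList G s c l = c := by
  exact ⟨⟨fun h => h.exists_dharSeq hG, fun ⟨_, hl⟩ => hl.recurrent hG hcs⟩,
    fun _ hl => hl.toppleList_eq⟩
end

section
/- Let F be a Ferrers diagram of semiperimeter n+1 and let c be a recurrent configuration on G(F). Then the canonical toppling process starting from c (topple the sink 0, then alternately topple simultaneously all currently unstable vertices in cols(F) and all currently unstable vertices in rows(F)) terminates, topples every vertex of {0,…,n} exactly once — so that CanonTop(c) is an ordered partition of the vertex set {0,…,n} — and the configuration reached after all these topplings is again c. -/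
open Classical

/-- A Ferrers diagram of semiperimeter `n + 1`, encoded by the set of its row labels
(labels `0, …, n` run along the south-east border; `0` labels the top row and the
last label `n` is a column label). -/
structure Ferrers (n : ℕ) where
  rows : Finset (Fin (n + 1))
  zero_mem : 0 ∈ rows
  last_not_mem : Fin.last n ∉ rows

namespace Ferrers

/-- `(i, j)` is a cell of the diagram: `i` is a row label, `j` a column label, `i < j`. -/
def Cell {n : ℕ} (F : Ferrers n) (i j : Fin (n + 1)) : Prop :=
  i ∈ F.rows ∧ j ∉ F.rows ∧ i < j

/-- Adjacency in the Ferrers graph `G(F)`. -/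
def Adj {n : ℕ} (F : Ferrers n) (u v : Fin (n + 1)) : Prop :=
  F.Cell u v ∨ F.Cell v u

/-- Degree of a vertex in `G(F)`. -/
noncomputable def deg {n : ℕ} (F : Ferrers n) (v : Fin (n + 1)) : ℕ :=
  {u | F.Adj v u}.ncard

/-- Toppling a single vertex.  The height at the sink `0` is kept equal to `c 0`
(grains sent to the sink vanish); toppling the sink sends one grain to each of
its neighbours. -/
noncomputable def topple {n : ℕ} (F : Ferrers n) (c : Fin (n + 1) → ℕ)
    (v : Fin (n + 1)) : Fin (n + 1) → ℕ :=
  fun u =>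
    if u = 0 then c 0
    else if u = v then c v - F.deg v
    else if F.Adj v u then c u + 1
    else c u

/-- Toppling the vertices of a list in order. -/
noncomputable def toppleList {n : ℕ} (F : Ferrers n) (c : Fin (n + 1) → ℕ)
    (l : List (Fin (n + 1))) : Fin (n + 1) → ℕ :=
  l.foldl F.topple c

/-- Simultaneous toppling of a set of vertices. -/
noncomputable def toppleSet {n : ℕ} (F : Ferrers n) (c : Fin (n + 1) → ℕ)
    (S : Set (Fin (n + 1))) : Fin (n + 1) → ℕ :=
  fun u =>
    if u = 0 then c 0
    else c u + {w ∈ S | F.Adj w u}.ncard - if u ∈ S then F.deg u else 0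

/-- A configuration is stable if every non-sink vertex has fewer grains than its degree. -/
def Stable {n : ℕ} (F : Ferrers n) (c : Fin (n + 1) → ℕ) : Prop :=
  ∀ v, v ≠ 0 → c v < F.deg v

/-- A Dhar (burning) ordering for `c`: an ordering `v₀ = 0, v₁, …, vₙ` of all the
vertices such that each `vᵢ` (`i ≥ 1`) is unstable after toppling `v₀, …, v_{i-1}`. -/
def DharSeq {n : ℕ} (F : Ferrers n) (c : Fin (n + 1) → ℕ) (l : List (Fin (n + 1))) : Prop :=
  l.length = n + 1 ∧ l.Nodup ∧ l.head? = some 0 ∧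
    ∀ i, ∀ h : i < l.length, 1 ≤ i →
      F.deg (l.get ⟨i, h⟩) ≤ F.toppleList c (l.take i) (l.get ⟨i, h⟩)

/-- Recurrent configurations (via Dhar's criterion).  The height at the sink is
normalised to `0`. -/
def Recurrent {n : ℕ} (F : Ferrers n) (c : Fin (n + 1) → ℕ) : Prop :=
  c 0 = 0 ∧ F.Stable c ∧ ∃ l, F.DharSeq c l

/-- Minimal recurrent configurations: recurrent with minimal total number of grains. -/
def RecMin {n : ℕ} (F : Ferrers n) (c : Fin (n + 1) → ℕ) : Prop :=
  F.Recurrent c ∧ ∀ c', F.Recurrent c' → (∑ v, c v) ≤ ∑ v, c' v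

/-- Canonical toppling: block `0` is `{0}` (the sink); from then on, blocks with odd
index are the sets of currently unstable column vertices and blocks with even index
the sets of currently unstable row vertices.  The first component is the configuration
just before toppling the block recorded in the second component. -/
noncomputable def canonAux {n : ℕ} (F : Ferrers n) (c : Fin (n + 1) → ℕ) :
    ℕ → ((Fin (n + 1) → ℕ) × Set (Fin (n + 1)))
  | 0 => (c, {0})
  | k + 1 =>
    let c' := F.toppleSet (canonAux F c k).1 (canonAux F c k).2
    (c', {v | v ≠ 0 ∧ (if k % 2 = 0 then v ∉ F.rows else v ∈ F.rows) ∧ F.deg v ≤ c' v})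

/-- The `k`-th block of the canonical toppling of `c`:
`canonTop F c 0 = U⁰ = {0}`, `canonTop F c (2i-1) = Vⁱ`, `canonTop F c (2i) = Uⁱ`. -/
noncomputable def canonTop {n : ℕ} (F : Ferrers n) (c : Fin (n + 1) → ℕ) (k : ℕ) :
    Set (Fin (n + 1)) :=
  (F.canonAux c k).2

/-- The configuration just before toppling the `k`-th block of the canonical toppling. -/
noncomputable def canonConfig {n : ℕ} (F : Ferrers n) (c : Fin (n + 1) → ℕ) (k : ℕ) :
    Fin (n + 1) → ℕ :=
  (F.canonAux c k).1

/-- The index of the block of the canonical toppling of `c` containing `v`. -/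
noncomputable def bIdx {n : ℕ} (F : Ferrers n) (c : Fin (n + 1) → ℕ) (v : Fin (n + 1)) : ℕ :=
  sInf {k | v ∈ F.canonTop c k}

/-- `T` is a EW-tableau on `F` (entries of non-cells are normalised to `false`):
the top row contains only `1`s, every other row contains a `0`, and there is no
rectangle with two diagonally opposite `0`s and two `1`s in the other corners. -/
def IsEW {n : ℕ} (F : Ferrers n) (T : Fin (n + 1) → Fin (n + 1) → Bool) : Prop :=
  (∀ i j, ¬F.Cell i j → T i j = false) ∧
  (∀ j, F.Cell 0 j → T 0 j = true) ∧
  (∀ i, i ∈ F.rows → i ≠ 0 → ∃ j, F.Cell i j ∧ T i j = false) ∧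
  (∀ i i' j j', F.Cell i j → F.Cell i j' → F.Cell i' j → F.Cell i' j' →
    T i j = T i' j' → T i j' = T i' j → T i j = T i j')

/-- The configuration associated to a tableau: row vertices count the `1`s in their
row, column vertices count the `0`s in their column (the sink is normalised to `0`). -/
noncomputable def phiTC {n : ℕ} (F : Ferrers n) (T : Fin (n + 1) → Fin (n + 1) → Bool) :
    Fin (n + 1) → ℕ :=
  fun v =>
    if v = 0 then 0
    else if v ∈ F.rows then {j | F.Cell v j ∧ T v j = true}.ncard
    else {i | F.Cell i v ∧ T i v = false}.ncard

/-- The tableau associated to a (minimal recurrent) configuration: a cell `(i, j)`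
gets a `1` exactly when `i` lies in an earlier block than `j` in the canonical
toppling of `c`. -/
noncomputable def phiCT {n : ℕ} (F : Ferrers n) (c : Fin (n + 1) → ℕ) :
    Fin (n + 1) → Fin (n + 1) → Bool :=
  fun i j => if F.Cell i j ∧ F.bIdx c i < F.bIdx c j then true else false

/-- The supplementary tableau of `T`: `S i j = 1` exactly when the row vertex `i`
lies in an earlier block than the column vertex `j` in `CanonTop (φ_TC T)`. -/
noncomputable def suppS {n : ℕ} (F : Ferrers n) (T : Fin (n + 1) → Fin (n + 1) → Bool)
    (i j : Fin (n + 1)) : Bool :=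
  if F.bIdx (F.phiTC T) i < F.bIdx (F.phiTC T) j then true else false

/-- The entry of `T` in cell `(j, k)` is a cornersupport entry. -/
def Cornersupport {n : ℕ} (F : Ferrers n) (T : Fin (n + 1) → Fin (n + 1) → Bool)
    (j k : Fin (n + 1)) : Prop :=
  ∃ j' k', j' ∈ F.rows ∧ k' ∉ F.rows ∧ j' ≠ j ∧ k' ≠ k ∧
    F.suppS T j' k' = !(T j k) ∧ F.suppS T j' k = T j k ∧ F.suppS T j k' = T j k

/-- `ν_v(T)`: the number of non-cornersupport `0`s in row `v` (if `v` is a row label),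
resp. non-cornersupport `1`s in column `v` (if `v` is a column label). -/
noncomputable def nu {n : ℕ} (F : Ferrers n) (T : Fin (n + 1) → Fin (n + 1) → Bool)
    (v : Fin (n + 1)) : ℕ :=
  if v ∈ F.rows then {k | F.Cell v k ∧ T v k = false ∧ ¬F.Cornersupport T v k}.ncard
  else {i | F.Cell i v ∧ T i v = true ∧ ¬F.Cornersupport T i v}.ncard

/-- `μ_v(c)`: if `v ∈ Uⁱ`, the number of `k ∈ Vⁱ` with `k > v`; if `v ∈ Vⁱ`,
the number of `k ∈ U^{i-1}` with `k < v`.  In both cases the relevant block is the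
one immediately preceding the block of `v`. -/
noncomputable def mu {n : ℕ} (F : Ferrers n) (c : Fin (n + 1) → ℕ) (v : Fin (n + 1)) : ℕ :=
  if v ∈ F.rows then {k | v < k ∧ k ∈ F.canonTop c (F.bIdx c v - 1)}.ncard
  else {k | k < v ∧ k ∈ F.canonTop c (F.bIdx c v - 1)}.ncard

/-- The minimal recurrent configuration with the same canonical toppling as `c`:
if `j ∈ Uⁱ` then `minrec c j = |{ℓ ∈ Vᵏ : j < ℓ, k > i}|`, and if `j ∈ Vⁱ` then
`minrec c j = |{ℓ ∈ Uᵏ : ℓ < j, k ≥ i}|` (blocks `Vᵏ` sit at odd index `2k - 1`,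
blocks `Uᵏ` at even index `2k`). -/
noncomputable def minrecFun {n : ℕ} (F : Ferrers n) (c : Fin (n + 1) → ℕ) :
    Fin (n + 1) → ℕ :=
  fun j =>
    if j = 0 then 0
    else if j ∈ F.rows then
      {l | j < l ∧ ∃ k, F.bIdx c j < 2 * k + 1 ∧ l ∈ F.canonTop c (2 * k + 1)}.ncard
    else
      {l | l < j ∧ ∃ k, F.bIdx c j < 2 * k ∧ l ∈ F.canonTop c (2 * k)}.ncard

/-- The number of edges of `G(F)` (equivalently, the number of cells of `F`). -/
noncomputable def edgeCount {n : ℕ} (F : Ferrers n) : ℕ :=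
  {p : Fin (n + 1) × Fin (n + 1) | F.Cell p.1 p.2}.ncard

end Ferrers

namespace Ferrers

variable {n : ℕ} {F : Ferrers n} {c : Fin (n + 1) → ℕ}

/-- The vertices toppled before the `k`-th block of the canonical toppling. -/
def toppled (F : Ferrers n) (c : Fin (n + 1) → ℕ) (k : ℕ) : Set (Fin (n + 1)) :=
  {v | ∃ j < k, v ∈ F.canonTop c j}

theorem adj_comm {u v : Fin (n + 1)} : F.Adj u v ↔ F.Adj v u := or_comm

theorem toppleList_apply_of_notMem {v : Fin (n + 1)} (hv : v ≠ 0) :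
    ∀ (l : List (Fin (n + 1))) (c : Fin (n + 1) → ℕ), l.Nodup → v ∉ l →
      F.toppleList c l v = c v + {w | w ∈ l ∧ F.Adj w v}.ncard
  | [], c, _, _ => by simp [toppleList]
  | a :: l, c, hl, hvl => by
    rw [List.nodup_cons] at hl
    rw [List.mem_cons, not_or] at hvl
    have ih := toppleList_apply_of_notMem hv l (F.topple c a) hl.2 hvl.2
    have hcons : F.toppleList c (a :: l) = F.toppleList (F.topple c a) l := rfl
    rw [hcons, ih]
    by_cases ha : F.Adj a v
    · have hset : {w | w ∈ a :: l ∧ F.Adj w v} = insert a {w | w ∈ l ∧ F.Adj w v} := by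
        ext w
        simp only [List.mem_cons, Set.mem_ofPred_eq, Set.mem_insert_iff]
        grind
      rw [hset, Set.ncard_insert_of_notMem (fun h => hl.1 h.1) (Set.toFinite _)]
      simp only [topple, hv, hvl.1, ha, if_true, if_false]
      omega
    · have hset : {w | w ∈ a :: l ∧ F.Adj w v} = {w | w ∈ l ∧ F.Adj w v} := by
        ext w
        simp only [List.mem_cons, Set.mem_ofPred_eq]
        grind
      rw [hset]
      simp only [topple, hv, hvl.1, ha, if_false]

theorem canonConfig_succ (k : ℕ) :
    F.canonConfig c (k + 1) = F.toppleSet (F.canonConfig c k) (F.canonTop c k) := rfl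

theorem mem_canonTop_succ {k : ℕ} {v : Fin (n + 1)} :
    v ∈ F.canonTop c (k + 1) ↔ v ≠ 0 ∧ (if k % 2 = 0 then v ∉ F.rows else v ∈ F.rows) ∧
      F.deg v ≤ F.canonConfig c (k + 1) v := Iff.rfl

theorem mem_canonTop_zero {v : Fin (n + 1)} : v ∈ F.canonTop c 0 ↔ v = 0 := Iff.rfl

theorem mem_toppled_succ {k : ℕ} {v : Fin (n + 1)} :
    v ∈ F.toppled c (k + 1) ↔ v ∈ F.toppled c k ∨ v ∈ F.canonTop c k := by
  simp only [toppled, Set.mem_ofPred_eq, Nat.lt_succ_iff_lt_or_eq, or_and_right, exists_or,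
    exists_eq_left]

theorem toppled_mono {j k : ℕ} (h : j ≤ k) : F.toppled c j ⊆ F.toppled c k :=
  fun _ ⟨i, hi, hv⟩ => ⟨i, hi.trans_le h, hv⟩

theorem canonConfig_zero_apply (k : ℕ) : F.canonConfig c k 0 = c 0 := by
  induction k with
  | zero => rfl
  | succ k ih => rw [canonConfig_succ, toppleSet, if_pos rfl, ih]

theorem ncard_adj_inter_le_deg (S : Set (Fin (n + 1))) (v : Fin (n + 1)) :
    {w ∈ S | F.Adj w v}.ncard ≤ F.deg v :=
  Set.ncard_le_ncard (fun _ h => adj_comm.1 h.2) (Set.toFinite _)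

theorem notMem_toppled_of_mem_canonTop_of_balance (hs : F.Stable c) {k : ℕ} {v : Fin (n + 1)}
    (hbal : v ≠ 0 → F.canonConfig c k v + (if v ∈ F.toppled c k then F.deg v else 0) =
      c v + {w ∈ F.toppled c k | F.Adj w v}.ncard)
    (hv : v ∈ F.canonTop c k) : v ∉ F.toppled c k := by
  intro ht
  cases k with
  | zero => obtain ⟨j, hj, -⟩ := ht; omega
  | succ k =>
    obtain ⟨hv0, -, hd⟩ := mem_canonTop_succ.1 hv
    have := hbal hv0
    rw [if_pos ht] at this
    have h1 := ncard_adj_inter_le_deg (F := F) (F.toppled c (k + 1)) v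
    have h2 := hs v hv0
    omega

/-- Conservation of grains along the canonical toppling. -/
theorem canonConfig_add_deg (hs : F.Stable c) (k : ℕ) : ∀ v : Fin (n + 1), v ≠ 0 →
    F.canonConfig c k v + (if v ∈ F.toppled c k then F.deg v else 0) =
      c v + {w ∈ F.toppled c k | F.Adj w v}.ncard := by
  induction k with
  | zero => intro v _; simp [toppled, canonConfig, canonAux]
  | succ k ih =>
    intro v hv0
    have hdisj : ∀ w, w ∈ F.canonTop c k → w ∉ F.toppled c k := fun w =>
      notMem_toppled_of_mem_canonTop_of_balance hs (ih w)
    have hset : {w ∈ F.toppled c (k + 1) | F.Adj w v} =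
        {w ∈ F.toppled c k | F.Adj w v} ∪ {w ∈ F.canonTop c k | F.Adj w v} := by
      ext w
      simp only [Set.mem_ofPred_eq, Set.mem_union, mem_toppled_succ, or_and_right]
    have hcard : {w ∈ F.toppled c (k + 1) | F.Adj w v}.ncard =
        {w ∈ F.toppled c k | F.Adj w v}.ncard + {w ∈ F.canonTop c k | F.Adj w v}.ncard := by
      rw [hset]
      exact Set.ncard_union_eq (Set.disjoint_left.2 fun w h h' => hdisj w h'.1 h.1)
        (Set.toFinite _) (Set.toFinite _)
    have hle : v ∈ F.canonTop c k → F.deg v ≤ F.canonConfig c k v := by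
      cases k with
      | zero => exact fun h => absurd h hv0
      | succ k => exact fun h => h.2.2
    have hstep : F.canonConfig c (k + 1) v = F.canonConfig c k v +
        {w ∈ F.canonTop c k | F.Adj w v}.ncard - if v ∈ F.canonTop c k then F.deg v else 0 := by
      rw [canonConfig_succ, toppleSet, if_neg hv0]
    have hv := ih v hv0
    have hd := hdisj v
    rw [hstep, hcard]
    by_cases h1 : v ∈ F.canonTop c k
    · have h2 := hd h1
      have h3 := hle h1
      simp only [mem_toppled_succ, h1, h2, or_true, if_true, if_false] at hv ⊢
      omega
    · simp only [mem_toppled_succ, h1, or_false, if_false] at hv ⊢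
      omega

theorem notMem_toppled_of_mem_canonTop (hs : F.Stable c) {k : ℕ} {v : Fin (n + 1)}
    (hv : v ∈ F.canonTop c k) : v ∉ F.toppled c k :=
  notMem_toppled_of_mem_canonTop_of_balance hs (canonConfig_add_deg hs k v) hv

theorem canonTop_index_unique (hs : F.Stable c) {j k : ℕ} {v : Fin (n + 1)}
    (hj : v ∈ F.canonTop c j) (hk : v ∈ F.canonTop c k) : j = k := by
  rcases lt_trichotomy j k with h | h | h
  · exact absurd ⟨j, h, hj⟩ (notMem_toppled_of_mem_canonTop hs hk)
  · exact h
  · exact absurd ⟨k, h, hk⟩ (notMem_toppled_of_mem_canonTop hs hj)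

/-- A vertex made unstable by its already toppled neighbours is eventually toppled. -/
theorem exists_mem_toppled (hs : F.Stable c) {k : ℕ} {v : Fin (n + 1)} (hv0 : v ≠ 0)
    (hd : F.deg v ≤ c v + {w ∈ F.toppled c k | F.Adj w v}.ncard) :
    ∃ m, k ≤ m ∧ v ∈ F.toppled c m := by
  obtain ⟨m, hkm, hpar⟩ : ∃ m, k ≤ m ∧ (if m % 2 = 0 then v ∉ F.rows else v ∈ F.rows) := by
    by_cases hr : v ∈ F.rows
    · refine ⟨2 * k + 1, by omega, ?_⟩
      rwa [if_neg (by omega)]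
    · refine ⟨2 * k, by omega, ?_⟩
      rwa [if_pos (by omega)]
  by_cases ht : v ∈ F.toppled c (m + 1)
  · exact ⟨m + 1, by omega, ht⟩
  · refine ⟨m + 2, by omega, mem_toppled_succ.2 (Or.inr (mem_canonTop_succ.2 ⟨hv0, hpar, ?_⟩))⟩
    have hbal := canonConfig_add_deg hs (m + 1) v hv0
    rw [if_neg ht] at hbal
    have hmono : {w ∈ F.toppled c k | F.Adj w v}.ncard ≤
        {w ∈ F.toppled c (m + 1) | F.Adj w v}.ncard :=
      Set.ncard_le_ncard (fun w h => ⟨toppled_mono (by omega) h.1, h.2⟩) (Set.toFinite _)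
    omega

theorem DharSeq.exists_take_subset_toppled (hs : F.Stable c) {l : List (Fin (n + 1))}
    (hl : F.DharSeq c l) (i : ℕ) : ∃ k, ∀ v ∈ l.take i, v ∈ F.toppled c k := by
  obtain ⟨-, hnd, hhead, hdhar⟩ := hl
  induction i with
  | zero => exact ⟨0, by simp⟩
  | succ i ih =>
    obtain ⟨k, hk⟩ := ih
    by_cases hi : i < l.length
    · suffices h : ∃ m, k ≤ m ∧ l[i] ∈ F.toppled c m by
        obtain ⟨m, hkm, hm⟩ := h
        refine ⟨m, fun v hv => ?_⟩
        rw [List.take_succ_eq_append_getElem hi, List.mem_append, List.mem_singleton] at hv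
        rcases hv with hv | rfl
        · exact toppled_mono hkm (hk v hv)
        · exact hm
      have hget0 : l[0]'(by omega) = 0 := by
        rw [List.head?_eq_getElem?, List.getElem?_eq_getElem (by omega)] at hhead
        exact Option.some.inj hhead
      rcases Nat.eq_zero_or_pos i with rfl | hpos
      · exact ⟨k + 1, by omega, 0, by omega, hget0⟩
      · have hv0 : l[i] ≠ 0 := by
          rw [← hget0, Ne, hnd.getElem_inj_iff]
          omega
        have hnot : l[i] ∉ l.take i := by
          intro h
          obtain ⟨j, hj, hji⟩ := List.mem_take_iff_getElem.1 h
          rw [hnd.getElem_inj_iff] at hji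
          omega
        have hd := hdhar i hi hpos
        rw [List.get_eq_getElem, toppleList_apply_of_notMem hv0 _ _
          (hnd.sublist (List.take_sublist i l)) hnot] at hd
        refine exists_mem_toppled hs hv0 (hd.trans (Nat.add_le_add_left ?_ _))
        exact Set.ncard_le_ncard (fun w h => ⟨hk w h.1, h.2⟩) (Set.toFinite _)
    · refine ⟨k, fun v hv => hk v ?_⟩
      rw [List.take_of_length_le (by omega)] at hv ⊢
      exact hv

theorem Recurrent.exists_toppled_eq_univ (hc : F.Recurrent c) :
    ∃ k, F.toppled c k = Set.univ := by
  obtain ⟨-, hs, l, hl⟩ := hc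
  obtain ⟨k, hk⟩ := hl.exists_take_subset_toppled hs l.length
  refine ⟨k, Set.eq_univ_of_forall fun v => hk v ?_⟩
  rw [List.take_length]
  have hcard : l.toFinset = Finset.univ := by
    rw [← Finset.card_eq_iff_eq_univ, List.toFinset_card_of_nodup hl.2.1, hl.1, Fintype.card_fin]
  exact List.mem_toFinset.1 (hcard ▸ Finset.mem_univ v)

end Ferrers

/-- For a recurrent configuration `c` on `G(F)`, the canonical
toppling process terminates, topples every vertex exactly once (so its blocks form
an ordered partition of the vertex set), and the configuration reached after all
these topplings is again `c`. -/
theorem canonical_toppling_of_recurrent {n : ℕ} (F : Ferrers n)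
    (c : Fin (n + 1) → ℕ) (hc : F.Recurrent c) :
    ∃ K : ℕ,
      (∀ k, K < k → F.canonTop c k = ∅) ∧
      (∀ v : Fin (n + 1), ∃! k : ℕ, v ∈ F.canonTop c k) ∧
      F.canonConfig c (K + 1) = c := by
  obtain ⟨K, hK⟩ := hc.exists_toppled_eq_univ
  have hs := hc.2.1
  have hmem : ∀ k, K ≤ k → ∀ v, v ∈ F.toppled c k := fun k hk v =>
    Ferrers.toppled_mono hk (hK ▸ Set.mem_univ v)
  refine ⟨K, fun k hk => ?_, fun v => ?_, ?_⟩
  · exact Set.eq_empty_of_forall_notMem fun v hv =>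
      Ferrers.notMem_toppled_of_mem_canonTop hs hv (hmem k hk.le v)
  · obtain ⟨j, -, hj⟩ := hmem K le_rfl v
    exact ⟨j, hj, fun k hk => Ferrers.canonTop_index_unique hs hk hj⟩
  · funext v
    by_cases hv0 : v = 0
    · rw [hv0, Ferrers.canonConfig_zero_apply]
    · have hbal := Ferrers.canonConfig_add_deg hs (K + 1) v hv0
      have hdeg : {w ∈ F.toppled c (K + 1) | F.Adj w v} = {u | F.Adj v u} := by
        ext w
        exact ⟨fun h => Ferrers.adj_comm.1 h.2,
          fun h => ⟨hmem _ (Nat.le_succ K) w, Ferrers.adj_comm.1 h⟩⟩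
      rw [if_pos (hmem _ (Nat.le_succ K) v), hdeg] at hbal
      exact Nat.add_right_cancel hbal
end
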